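/- Let λ ≥ 2 and n ≥ 1 be integers. Let S be a nonzero rational trigonometric polynomial nonnegative on ℝⁿ, let τ be a rational trigonometric polynomial with τ(0) = 1, and let s be a rational trigonometric polynomial with |s(ξ)|² = 1/S(ξ) wherever defined. Suppose there exist rational trigonometric polynomials g_1, …, g_L such that 1/S(λξ) − Σ_{γ∈Γ} |τ(ξ + γ)|²/S(ξ + γ) = Σ_{l=1}^{L} |g_l(λξ)|² for all ξ at which both sides are defined. For 1 ≤ m ≤ λ^n set a_m(ξ) := λ^{−n/2} e^{i ν_m·ξ} s(ξ), where ν_1, …, ν_{λ^n} enumerate Λ, and define q_{1,l}(ξ) = S(λξ) τ(ξ) conj(g_l(λξ)) for 1 ≤ l ≤ L and q_{2,m}(ξ) = S(ξ) a_m(ξ) − S(λξ) τ(ξ) Σ_{γ∈Γ} conj(τ(ξ+γ)) a_m(ξ+γ) for 1 ≤ m ≤ λ^n. Then for every γ ∈ Γ and all ξ at which both sides are defined: S(λξ) τ(ξ) conj(τ(ξ+γ)) + Σ_{l=1}^{L} q_{1,l}(ξ) conj(q_{1,l}(ξ+γ)) + Σ_{m=1}^{λ^n} q_{2,m}(ξ)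 conj(q_{2,m}(ξ+γ)) equals S(ξ) if γ = 0 and equals 0 if γ ∈ Γ∖{0}. -/

import Mathlib

open MeasureTheory Finset Filter Topology

noncomputable section

/-- `f` is a trigonometric polynomial on ℝⁿ: a finite sum ξ ↦ Σ_{k∈F} h(k) e^{−i k·ξ}. -/
def IsTrigPoly (n : ℕ) (f : (Fin n → ℝ) → ℂ) : Prop :=
  ∃ (F : Finset (Fin n → ℤ)) (h : (Fin n → ℤ) → ℂ),
    ∀ ξ : Fin n → ℝ,
      f ξ = ∑ k ∈ F, h k * Complex.exp (-Complex.I * ∑ i, (k i : ℂ) * (ξ i : ℂ))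

/-- Λ = {0,…,λ−1}ⁿ as a finite subset of ℤⁿ. -/
def Lambda (lam n : ℕ) : Finset (Fin n → ℤ) :=
  Fintype.piFinset fun _ => Finset.Ico (0 : ℤ) (lam : ℤ)

/-- The translate ξ + (2π/λ)·ρ, i.e. ξ + γ for γ = (2π/λ)ρ ∈ Γ. -/
def gshift (lam n : ℕ) (ξ : Fin n → ℝ) (ρ : Fin n → ℤ) : Fin n → ℝ :=
  fun i => ξ i + (2 * Real.pi / lam) * (ρ i : ℝ)

/-- e^{i ν·ξ}. -/
def eI (n : ℕ) (ν : Fin n → ℤ) (ξ : Fin n → ℝ) : ℂ :=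
  Complex.exp (Complex.I * ∑ i, (ν i : ℂ) * (ξ i : ℂ))

/-- The dilate λ·ξ. -/
def dil (lam n : ℕ) (ξ : Fin n → ℝ) : Fin n → ℝ := fun i => (lam : ℝ) * ξ i
/-- A rational trigonometric polynomial: a quotient of two trigonometric polynomials
(with denominator not identically zero).  Its value at ξ (using Lean's total division,
with junk value 0 where the denominator vanishes) is `num ξ / den ξ`; it is *defined*
at ξ precisely when `den ξ ≠ 0`. -/
structure RatTrigPoly (n : ℕ) where
  num : (Fin n → ℝ) → ℂ
  den : (Fin n → ℝ) → ℂ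
  num_trig : IsTrigPoly n num
  den_trig : IsTrigPoly n den
  den_ne : ∃ ξ, den ξ ≠ 0

/-- Pointwise value of a rational trigonometric polynomial. -/
def RatTrigPoly.eval {n : ℕ} (f : RatTrigPoly n) (ξ : Fin n → ℝ) : ℂ := f.num ξ / f.den ξ

instance {n : ℕ} : CoeFun (RatTrigPoly n) (fun _ => (Fin n → ℝ) → ℂ) := ⟨RatTrigPoly.eval⟩

/-- `f` is defined at `ξ` iff its denominator does not vanish there. -/
def RatTrigPoly.DefinedAt {n : ℕ} (f : RatTrigPoly n) (ξ : Fin n → ℝ) : Prop := f.den ξ ≠ 0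

/-!
Fix `ξ`, let `t` be the vector `(τ(ξ + γ))_γ`, let `H` be the diagonal matrix of the `S(ξ + γ)` and
`A` the matrix `(a_m(ξ + γ))_{γ,m}`. Orthogonality of the characters of `ℤⁿ/λℤⁿ` and `|s|² = 1/S`
give `A A* = H⁻¹`. With `D = S(λξ)`, periodicity turns the matrix of the second family of masks into
`(H - D t t*) A`, whose Gram matrix is `H - 2 D t t* + D² (t* H⁻¹ t) t t*`. The first family
contributes `D² G t t*` with `G = ∑ |g_l(λξ)|²`, and the sum of squares hypothesis is exactly
`D² (t* H⁻¹ t + G) = D`, so everything except `H` cancels against `D t t*`.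

The relation `|s|² = 1/S` is only given off the zeros of `S`. These have dense complement, so by
continuity `|s|² S = 1` wherever `s` and `S` are both defined.
-/

section Matrix

open Matrix

variable {ι κ K : Type*} [Fintype κ] [CommRing K] [StarRing K] {D : K}

theorem gram_vecMulVec_smul_star (hD : IsSelfAdjoint D) (t : ι → K) (w : κ → K) :
    vecMulVec (D • t) (star w) * (vecMulVec (D • t) (star w))ᴴ =
      (D ^ 2 * (star w ⬝ᵥ w)) • vecMulVec t (star t) := by
  rw [conjTranspose_vecMulVec, star_star, vecMulVec_mul_vecMulVec, star_smul, hD.star_eq,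
    vecMulVec_smul, vecMulVec_smul, smul_vecMulVec, smul_smul, smul_smul]
  congr 1
  ring

variable [Fintype ι]

theorem rankOne_mul_mul_rankOne (M : Matrix ι ι K) (t : ι → K) :
    vecMulVec t (star t) * M * vecMulVec t (star t) =
      (star t ⬝ᵥ M *ᵥ t) • vecMulVec t (star t) := by
  rw [Matrix.mul_assoc, mul_vecMulVec, vecMulVec_mul_vecMulVec, vecMulVec_smul]

variable [DecidableEq ι] {H : Matrix ι ι K} {A : Matrix ι κ K}

theorem isHermitian_of_mul_gram_eq_one (hA : H * (A * Aᴴ) = 1) : H.IsHermitian := by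
  have hA' : (A * Aᴴ) * Hᴴ = 1 := by
    simpa [Matrix.mul_assoc] using congrArg conjTranspose hA
  exact (left_inv_eq_right_inv hA hA').symm

theorem gram_sub_smul_rankOne_mul (hA : H * (A * Aᴴ) = 1) (hD : IsSelfAdjoint D) (t : ι → K) :
    ((H - D • vecMulVec t (star t)) * A) * ((H - D • vecMulVec t (star t)) * A)ᴴ =
      H + (D ^ 2 * (star t ⬝ᵥ (A * Aᴴ) *ᵥ t) - 2 * D) • vecMulVec t (star t) := by
  set P := vecMulVec t (star t) with hP
  have hA' : (A * Aᴴ) * H = 1 := mul_eq_one_comm.mp hA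
  have hstar : (H - D • P)ᴴ = H - D • P := by
    rw [conjTranspose_sub, conjTranspose_smul, hP, conjTranspose_vecMulVec, star_star, hD.star_eq,
      (isHermitian_of_mul_gram_eq_one hA).eq]
  calc ((H - D • P) * A) * ((H - D • P) * A)ᴴ
      = (H - D • P) * (A * Aᴴ) * (H - D • P) := by
        simp only [conjTranspose_mul, hstar, Matrix.mul_assoc]
    _ = H - (2 * D) • P + D ^ 2 • (P * (A * Aᴴ) * P) := by
        simp only [Matrix.sub_mul, Matrix.mul_sub, hA, smul_mul_assoc, mul_smul_comm,
          Matrix.mul_assoc P _ H, hA', Matrix.one_mul, Matrix.mul_one, smul_sub, smul_smul]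
        module
    _ = H + (D ^ 2 * (star t ⬝ᵥ (A * Aᴴ) *ᵥ t) - 2 * D) • P := by
        rw [rankOne_mul_mul_rankOne, ← hP]
        module

theorem smul_rankOne_add_gram_eq (hA : H * (A * Aᴴ) = 1) (hD : IsSelfAdjoint D) {t : ι → K}
    {G : K} (hG : D ^ 2 * (star t ⬝ᵥ (A * Aᴴ) *ᵥ t + G) = D) :
    (D + D ^ 2 * G) • vecMulVec t (star t) +
      ((H - D • vecMulVec t (star t)) * A) * ((H - D • vecMulVec t (star t)) * A)ᴴ = H := by
  have hcoeff : D + D ^ 2 * G + (D ^ 2 * (star t ⬝ᵥ (A * Aᴴ) *ᵥ t) - 2 * D) = 0 := by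
    linear_combination hG
  rw [gram_sub_smul_rankOne_mul hA hD, add_left_comm, ← add_smul, hcoeff, zero_smul, add_zero]

end Matrix

section TrigPoly

variable {n : ℕ}

/-- Periodicity with respect to the lattice `2πℤⁿ`. -/
def IsTwoPiPeriodic {α : Type*} (f : (Fin n → ℝ) → α) : Prop :=
  ∀ k : Fin n → ℤ, Function.Periodic f fun i => 2 * Real.pi * k i

theorem eI_add_left (k l : Fin n → ℤ) (ξ : Fin n → ℝ) : eI n (k + l) ξ = eI n k ξ * eI n l ξ := by
  simp only [eI, ← Complex.exp_add, ← mul_add, ← Finset.sum_add_distrib, Pi.add_apply,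
    Int.cast_add, add_mul]

theorem eI_add_right (k : Fin n → ℤ) (ξ η : Fin n → ℝ) :
    eI n k (ξ + η) = eI n k ξ * eI n k η := by
  simp only [eI, ← Complex.exp_add, ← mul_add, ← Finset.sum_add_distrib, Pi.add_apply,
    Complex.ofReal_add]

theorem eI_mul_conj_eI (k : Fin n → ℤ) (ξ η : Fin n → ℝ) :
    eI n k ξ * starRingEnd ℂ (eI n k η) = eI n k (ξ - η) := by
  simp only [eI, ← Complex.exp_conj, ← Complex.exp_add, map_mul, map_sum, Complex.conj_I,
    Complex.conj_ofReal, map_intCast, neg_mul, ← sub_eq_add_neg, ← mul_sub,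
    ← Finset.sum_sub_distrib, Pi.sub_apply, Complex.ofReal_sub]

theorem eI_two_pi_mul_intCast (k m : Fin n → ℤ) : eI n k (fun i => 2 * Real.pi * m i) = 1 := by
  rw [eI, Complex.exp_eq_one_iff]
  refine ⟨∑ i, k i * m i, ?_⟩
  push_cast
  rw [Finset.mul_sum, Finset.sum_mul]
  exact Finset.sum_congr rfl fun i _ => by ring

theorem isTwoPiPeriodic_eI (k : Fin n → ℤ) : IsTwoPiPeriodic (eI n k) := fun m ξ => by
  rw [eI_add_right, eI_two_pi_mul_intCast, mul_one]

namespace IsTrigPoly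

variable {f : (Fin n → ℝ) → ℂ}

theorem exists_eq_sum_eI (hf : IsTrigPoly n f) :
    ∃ (F : Finset (Fin n → ℤ)) (h : (Fin n → ℤ) → ℂ), f = fun ξ => ∑ k ∈ F, h k * eI n (-k) ξ := by
  obtain ⟨F, h, hf⟩ := hf
  refine ⟨F, h, funext fun ξ => (hf ξ).trans ?_⟩
  simp [eI]

theorem isTwoPiPeriodic (hf : IsTrigPoly n f) : IsTwoPiPeriodic f := by
  obtain ⟨F, h, rfl⟩ := hf.exists_eq_sum_eI
  intro m ξ
  simp only [isTwoPiPeriodic_eI _ m ξ]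

theorem analyticOnNhd (hf : IsTrigPoly n f) : AnalyticOnNhd ℝ f Set.univ := by
  obtain ⟨F, h, rfl⟩ := hf.exists_eq_sum_eI
  intro ξ _
  have hcoord (i : Fin n) : AnalyticAt ℝ (fun η : Fin n → ℝ => (η i : ℂ)) ξ :=
    (Complex.ofRealCLM.comp (ContinuousLinearMap.proj (R := ℝ) (φ := fun _ => ℝ) i)).analyticAt ξ
  refine Finset.analyticAt_fun_sum _ fun k _ => analyticAt_const.mul ?_
  refine analyticAt_cexp.restrictScalars.fun_comp (analyticAt_const.mul ?_)
  exact Finset.analyticAt_fun_sum _ fun i _ => analyticAt_const.mul (hcoord i)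

theorem continuous (hf : IsTrigPoly n f) : Continuous f :=
  continuousOn_univ.mp hf.analyticOnNhd.continuousOn

theorem frequently_ne_zero (hf : IsTrigPoly n f) (hf₀ : f ≠ 0) (ξ : Fin n → ℝ) :
    ∃ᶠ η in 𝓝 ξ, f η ≠ 0 := fun h =>
  hf₀ <| hf.analyticOnNhd.eq_of_eventuallyEq analyticOnNhd_const
    (h.mono fun _ hη => not_not.mp hη)

end IsTrigPoly

namespace RatTrigPoly

variable {f g : RatTrigPoly n} {ξ : Fin n → ℝ}

theorem isTwoPiPeriodic (f : RatTrigPoly n) : IsTwoPiPeriodic f := fun k ξ =>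
  congrArg₂ (· / ·) (f.num_trig.isTwoPiPeriodic k ξ) (f.den_trig.isTwoPiPeriodic k ξ)

theorem DefinedAt.continuousAt (hf : f.DefinedAt ξ) : ContinuousAt f ξ :=
  f.num_trig.continuous.continuousAt.div f.den_trig.continuous.continuousAt hf

theorem DefinedAt.eventually (hf : f.DefinedAt ξ) : ∀ᶠ η in 𝓝 ξ, f.DefinedAt η :=
  f.den_trig.continuous.continuousAt.eventually_ne hf

theorem DefinedAt.frequently_ne_zero (hf : f.DefinedAt ξ) (hf₀ : ∃ η, f η ≠ 0) :
    ∃ᶠ η in 𝓝 ξ, f η ≠ 0 := by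
  have hnum : f.num ≠ 0 := by
    intro h
    obtain ⟨η, hη⟩ := hf₀
    exact hη (by simp [eval, h])
  exact ((f.num_trig.frequently_ne_zero hnum ξ).and_eventually hf.eventually).mono
    fun η hη => div_ne_zero hη.1 hη.2

theorem normSq_mul_eq_one (hf₀ : ∃ η, f η ≠ 0)
    (hg : ∀ η, g.DefinedAt η → f.DefinedAt η → f η ≠ 0 → ((‖g η‖ ^ 2 : ℝ) : ℂ) = (f η)⁻¹)
    (hgξ : g.DefinedAt ξ) (hfξ : f.DefinedAt ξ) : ((‖g ξ‖ ^ 2 : ℝ) : ℂ) * f ξ = 1 := by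
  have hcont : ContinuousAt (fun η => ((‖g η‖ ^ 2 : ℝ) : ℂ) * f η) ξ :=
    (Complex.continuous_ofReal.continuousAt.comp (hgξ.continuousAt.norm.pow 2)).mul
      hfξ.continuousAt
  have hfreq : ∃ᶠ η in 𝓝 ξ, ((‖g η‖ ^ 2 : ℝ) : ℂ) * f η = 1 := by
    refine ((hfξ.frequently_ne_zero hf₀).and_eventually
      (hgξ.eventually.and hfξ.eventually)).mono ?_
    rintro η ⟨hη₀, hgη, hfη⟩
    rw [hg η hgη hfη hη₀, inv_mul_cancel₀ hη₀]
  exact isClosed_singleton.mem_of_frequently_of_tendsto hfreq hcont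

end RatTrigPoly

end TrigPoly

section Lattice

variable {lam n : ℕ}

theorem mem_Lambda {ρ : Fin n → ℤ} : ρ ∈ Lambda lam n ↔ ∀ i, 0 ≤ ρ i ∧ ρ i < lam := by
  simp [Lambda]

theorem card_Lambda : (Lambda lam n).card = lam ^ n := by
  simp [Lambda]

theorem zero_mem_Lambda (hlam : lam ≠ 0) : 0 ∈ Lambda lam n :=
  mem_Lambda.mpr fun _ => ⟨le_rfl, by simpa using Nat.pos_of_ne_zero hlam⟩

theorem emod_mem_Lambda (hlam : lam ≠ 0) (ρ : Fin n → ℤ) : (fun i => ρ i % lam) ∈ Lambda lam n :=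
  mem_Lambda.mpr fun _ => ⟨Int.emod_nonneg _ (by exact_mod_cast hlam),
    Int.emod_lt_of_pos _ (by omega)⟩

theorem emod_eq_self_of_mem_Lambda {ρ : Fin n → ℤ} (hρ : ρ ∈ Lambda lam n) :
    (fun i => ρ i % lam) = ρ :=
  funext fun i => Int.emod_eq_of_lt (mem_Lambda.mp hρ i).1 (mem_Lambda.mp hρ i).2

theorem exists_not_dvd_sub_of_ne {ρ ρ' : Fin n → ℤ} (hρ : ρ ∈ Lambda lam n)
    (hρ' : ρ' ∈ Lambda lam n) (hne : ρ ≠ ρ') : ∃ i, ¬ (lam : ℤ) ∣ (ρ - ρ') i := by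
  obtain ⟨i, hi⟩ := Function.ne_iff.mp hne
  refine ⟨i, fun hdvd => hi (sub_eq_zero.mp (Int.eq_zero_of_abs_lt_dvd hdvd ?_))⟩
  have := mem_Lambda.mp hρ i
  have := mem_Lambda.mp hρ' i
  rw [abs_lt]
  omega

theorem sum_Lambda_add_right (hlam : lam ≠ 0) {M : Type*} [AddCommMonoid M]
    {f : (Fin n → ℤ) → M} (hf : ∀ k, Function.Periodic f ((lam : ℤ) • k)) (ρ₀ : Fin n → ℤ) :
    ∑ ρ ∈ Lambda lam n, f (ρ + ρ₀) = ∑ ρ ∈ Lambda lam n, f ρ := by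
  have hmod (ρ : Fin n → ℤ) : f (fun i => ρ i % lam) = f ρ := by
    rw [← hf (fun i => ρ i / lam)]
    exact congrArg f (funext fun i => Int.emod_add_mul_ediv _ _)
  refine Finset.sum_nbij' (fun ρ i => (ρ i + ρ₀ i) % lam) (fun ρ i => (ρ i - ρ₀ i) % lam)
    (fun ρ _ => emod_mem_Lambda hlam (ρ + ρ₀)) (fun ρ _ => emod_mem_Lambda hlam (ρ - ρ₀))
    (fun ρ hρ => ?_) (fun ρ hρ => ?_) fun ρ _ => (hmod (ρ + ρ₀)).symm
  · simpa only [Int.emod_sub_emod, add_sub_cancel_right] using emod_eq_self_of_mem_Lambda hρ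
  · simpa only [Int.emod_add_emod, sub_add_cancel] using emod_eq_self_of_mem_Lambda hρ

theorem gshift_zero (ξ : Fin n → ℝ) : gshift lam n ξ 0 = ξ := by
  ext i
  simp [gshift]

theorem gshift_gshift (ξ : Fin n → ℝ) (ρ ρ' : Fin n → ℤ) :
    gshift lam n (gshift lam n ξ ρ) ρ' = gshift lam n ξ (ρ' + ρ) := by
  ext i
  simp only [gshift, Pi.add_apply, Int.cast_add]
  ring

theorem gshift_sub_gshift (ξ : Fin n → ℝ) (ρ ρ' : Fin n → ℤ) :
    gshift lam n ξ ρ - gshift lam n ξ ρ' = gshift lam n 0 (ρ - ρ') := by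
  ext i
  simp only [gshift, Pi.sub_apply, Pi.zero_apply, Int.cast_sub]
  ring

theorem gshift_add_smul (hlam : lam ≠ 0) (ξ : Fin n → ℝ) (ρ k : Fin n → ℤ) :
    gshift lam n ξ (ρ + (lam : ℤ) • k) = gshift lam n ξ ρ + fun i => 2 * Real.pi * k i := by
  ext i
  simp only [gshift, Pi.add_apply, Pi.smul_apply, smul_eq_mul]
  push_cast
  field_simp
  ring

theorem dil_gshift (hlam : lam ≠ 0) (ξ : Fin n → ℝ) (ρ : Fin n → ℤ) :
    dil lam n (gshift lam n ξ ρ) = dil lam n ξ + fun i => 2 * Real.pi * ρ i := by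
  ext i
  simp only [dil, gshift, Pi.add_apply]
  field_simp

namespace IsTwoPiPeriodic

theorem apply_dil_gshift {α : Type*} {f : (Fin n → ℝ) → α} (hf : IsTwoPiPeriodic f)
    (hlam : lam ≠ 0) (ξ : Fin n → ℝ) (ρ : Fin n → ℤ) :
    f (dil lam n (gshift lam n ξ ρ)) = f (dil lam n ξ) := by
  rw [dil_gshift hlam, hf ρ]

theorem sum_gshift_gshift {M : Type*} [AddCommMonoid M] {f : (Fin n → ℝ) → M}
    (hf : IsTwoPiPeriodic f) (hlam : lam ≠ 0) (ξ : Fin n → ℝ) (ρ₀ : Fin n → ℤ) :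
    ∑ ρ ∈ Lambda lam n, f (gshift lam n (gshift lam n ξ ρ₀) ρ) =
      ∑ ρ ∈ Lambda lam n, f (gshift lam n ξ ρ) := by
  simp only [gshift_gshift]
  refine sum_Lambda_add_right (f := fun ρ => f (gshift lam n ξ ρ)) hlam (fun k ρ => ?_) ρ₀
  simp only [gshift_add_smul hlam, hf k _]

end IsTwoPiPeriodic

theorem eI_smul_gshift_zero (hlam : lam ≠ 0) (k d : Fin n → ℤ) :
    eI n ((lam : ℤ) • k) (gshift lam n 0 d) = 1 := by
  rw [← eI_two_pi_mul_intCast k d]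
  simp only [eI, gshift, Pi.smul_apply, smul_eq_mul, Pi.zero_apply, zero_add]
  congr! 3 with i
  push_cast
  field_simp

theorem eI_single_gshift_zero_ne_one (hlam : lam ≠ 0) {d : Fin n → ℤ} {i : Fin n}
    (hd : ¬ (lam : ℤ) ∣ d i) : eI n (Pi.single i 1) (gshift lam n 0 d) ≠ 1 := by
  have heq : eI n (Pi.single i 1) (gshift lam n 0 d) =
      Complex.exp (2 * Real.pi * Complex.I / lam) ^ d i := by
    rw [eI, ← Complex.exp_int_mul, Finset.sum_eq_single i (fun j _ hj => by simp [hj]) (by simp)]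
    simp only [Pi.single_eq_same, gshift, Pi.zero_apply]
    push_cast
    ring_nf
  rwa [heq, Ne, (Complex.isPrimitiveRoot_exp lam hlam).zpow_eq_one_iff_dvd]

-- Translating the index by `Pi.single i 1` multiplies the sum by a number different from `1`.
theorem sum_Lambda_eI_eq_zero (hlam : lam ≠ 0) {d : Fin n → ℤ} {i : Fin n}
    (hd : ¬ (lam : ℤ) ∣ d i) : ∑ k ∈ Lambda lam n, eI n k (gshift lam n 0 d) = 0 := by
  have hshift := sum_Lambda_add_right (f := fun k => eI n k (gshift lam n 0 d)) hlam
    (fun k ρ => by simp only [eI_add_left, eI_smul_gshift_zero hlam, mul_one]) (Pi.single i 1)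
  simp only [eI_add_left, ← Finset.sum_mul] at hshift
  exact ((mul_right_eq_self₀).mp hshift).resolve_left (eI_single_gshift_zero_ne_one hlam hd)

theorem sum_Lambda_eI_mul_conj_eI (hlam : lam ≠ 0) (ξ : Fin n → ℝ) {ρ ρ' : Fin n → ℤ}
    (hρ : ρ ∈ Lambda lam n) (hρ' : ρ' ∈ Lambda lam n) :
    ∑ k ∈ Lambda lam n, eI n k (gshift lam n ξ ρ) * starRingEnd ℂ (eI n k (gshift lam n ξ ρ')) =
      if ρ = ρ' then (lam : ℂ) ^ n else 0 := by
  simp only [eI_mul_conj_eI, gshift_sub_gshift]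
  split_ifs with h
  · simp [h, gshift_zero, eI, card_Lambda]
  · obtain ⟨i, hi⟩ := exists_not_dvd_sub_of_ne hρ hρ' h
    exact sum_Lambda_eI_eq_zero hlam hi

theorem sum_eI_mul_conj_eI_of_bijOn (hlam : lam ≠ 0) {κ : Type*} [Fintype κ]
    {ν : κ → Fin n → ℤ} (hν : Set.BijOn ν Set.univ (Lambda lam n)) (ξ : Fin n → ℝ)
    {ρ ρ' : Fin n → ℤ} (hρ : ρ ∈ Lambda lam n) (hρ' : ρ' ∈ Lambda lam n) :
    ∑ m, eI n (ν m) (gshift lam n ξ ρ) * starRingEnd ℂ (eI n (ν m) (gshift lam n ξ ρ')) =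
      if ρ = ρ' then (lam : ℂ) ^ n else 0 := by
  rw [← sum_Lambda_eI_mul_conj_eI hlam ξ hρ hρ']
  exact Finset.sum_nbij ν (fun m _ => hν.mapsTo trivial) (by simpa using hν.injOn)
    (by simpa using hν.surjOn) fun _ _ => rfl

end Lattice

section Modulation

open Matrix

variable {lam n : ℕ} {ι κ : Type*}

/-- The vector `(f(ξ + γ))_γ` of values of `f` on the coset `ξ + Γ`, with `γ = (2π/λ)ρ` indexed by
`ρ ∈ Λ`. -/
def modulationVector (lam : ℕ) (f : (Fin n → ℝ) → ℂ) (ξ : Fin n → ℝ) : Lambda lam n → ℂ :=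
  fun ρ => f (gshift lam n ξ ρ)

/-- The modulation matrix `(f_m(ξ + γ))_{γ,m}` of a family of masks, with `γ = (2π/λ)ρ` indexed by
`ρ ∈ Λ`. -/
def modulationMatrix (lam : ℕ) (f : κ → (Fin n → ℝ) → ℂ) (ξ : Fin n → ℝ) :
    Matrix (Lambda lam n) κ ℂ :=
  Matrix.of fun ρ m => f m (gshift lam n ξ ρ)

variable {S τ s : (Fin n → ℝ) → ℂ} {ξ : Fin n → ℝ}

theorem modulationMatrix_eq_vecMulVec (hS : IsTwoPiPeriodic S) {g : κ → (Fin n → ℝ) → ℂ}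
    (hg : ∀ l, IsTwoPiPeriodic (g l)) (hlam : lam ≠ 0) {q : κ → (Fin n → ℝ) → ℂ}
    (hq : ∀ l ξ, q l ξ = S (dil lam n ξ) * τ ξ * starRingEnd ℂ (g l (dil lam n ξ)))
    (ξ : Fin n → ℝ) :
    modulationMatrix lam q ξ =
      vecMulVec (S (dil lam n ξ) • modulationVector lam τ ξ) (star fun l => g l (dil lam n ξ)) := by
  ext ρ l
  simp only [modulationMatrix, of_apply, hq, hS.apply_dil_gshift hlam, (hg l).apply_dil_gshift hlam]
  rfl

theorem modulationMatrix_eq_sub_smul_rankOne_mul (hS : IsTwoPiPeriodic S) (hτ : IsTwoPiPeriodic τ)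
    {a : κ → (Fin n → ℝ) → ℂ} (ha : ∀ m, IsTwoPiPeriodic (a m)) (hlam : lam ≠ 0)
    {q : κ → (Fin n → ℝ) → ℂ}
    (hq : ∀ m ξ, q m ξ = S ξ * a m ξ - S (dil lam n ξ) * τ ξ *
      ∑ ρ ∈ Lambda lam n, starRingEnd ℂ (τ (gshift lam n ξ ρ)) * a m (gshift lam n ξ ρ))
    (ξ : Fin n → ℝ) :
    modulationMatrix lam q ξ =
      (diagonal (modulationVector lam S ξ) - S (dil lam n ξ) •
        vecMulVec (modulationVector lam τ ξ) (star (modulationVector lam τ ξ))) *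
      modulationMatrix lam a ξ := by
  ext ρ m
  have hper : IsTwoPiPeriodic fun η => starRingEnd ℂ (τ η) * a m η := fun k η => by
    simp only [hτ k η, ha m k η]
  simp only [modulationMatrix, of_apply, hq, hS.apply_dil_gshift hlam, hper.sum_gshift_gshift hlam]
  rw [Matrix.sub_mul, Matrix.sub_apply, diagonal_mul, smul_mul, Matrix.smul_apply, vecMulVec_mul,
    vecMulVec_apply, smul_eq_mul, mul_assoc, ← Finset.sum_coe_sort]
  rfl

theorem dotProduct_diagonal_normSq_mulVec
    (hSs : ∀ ρ ∈ Lambda lam n, ((‖s (gshift lam n ξ ρ)‖ ^ 2 : ℝ) : ℂ) * S (gshift lam n ξ ρ) = 1) :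
    star (modulationVector lam τ ξ) ⬝ᵥ
        diagonal (modulationVector lam (fun η => ((‖s η‖ ^ 2 : ℝ) : ℂ)) ξ) *ᵥ
          modulationVector lam τ ξ =
      ∑ ρ ∈ Lambda lam n, ((‖τ (gshift lam n ξ ρ)‖ ^ 2 : ℝ) : ℂ) / S (gshift lam n ξ ρ) := by
  rw [← Finset.sum_coe_sort]
  refine Finset.sum_congr rfl fun ρ _ => ?_
  rw [mulVec_diagonal, Pi.star_apply, modulationVector, modulationVector,
    eq_inv_of_mul_eq_one_left (hSs ρ ρ.2), Complex.ofReal_pow, ← Complex.conj_mul',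
    ← starRingEnd_apply]
  ring

variable [Fintype κ]

theorem modulationMatrix_mul_conjTranspose_eq_diagonal (hlam : lam ≠ 0) {ν : κ → Fin n → ℤ}
    (hν : Set.BijOn ν Set.univ (Lambda lam n)) {a : κ → (Fin n → ℝ) → ℂ}
    (ha : ∀ m ξ, a m ξ = ((Real.sqrt ((lam : ℝ) ^ n))⁻¹ : ℂ) * eI n (ν m) ξ * s ξ)
    (ξ : Fin n → ℝ) :
    modulationMatrix lam a ξ * (modulationMatrix lam a ξ)ᴴ =
      diagonal (modulationVector lam (fun η => ((‖s η‖ ^ 2 : ℝ) : ℂ)) ξ) := by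
  have hsqrt : ((Real.sqrt ((lam : ℝ) ^ n) : ℝ) : ℂ)⁻¹ * ((Real.sqrt ((lam : ℝ) ^ n) : ℝ) : ℂ)⁻¹ =
      ((lam : ℂ) ^ n)⁻¹ := by
    rw [← mul_inv, ← Complex.ofReal_mul, Real.mul_self_sqrt (by positivity)]
    push_cast
    rfl
  ext ρ ρ'
  have hterm (m : κ) : a m (gshift lam n ξ ρ) * starRingEnd ℂ (a m (gshift lam n ξ ρ')) =
      ((lam : ℂ) ^ n)⁻¹ * (s (gshift lam n ξ ρ) * starRingEnd ℂ (s (gshift lam n ξ ρ'))) *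
        (eI n (ν m) (gshift lam n ξ ρ) * starRingEnd ℂ (eI n (ν m) (gshift lam n ξ ρ'))) := by
    rw [ha, ha, ← hsqrt]
    simp only [map_mul, map_inv₀, Complex.conj_ofReal]
    ring
  calc ∑ m, a m (gshift lam n ξ ρ) * starRingEnd ℂ (a m (gshift lam n ξ ρ'))
      = ((lam : ℂ) ^ n)⁻¹ * (s (gshift lam n ξ ρ) * starRingEnd ℂ (s (gshift lam n ξ ρ'))) *
          if ρ = ρ' then (lam : ℂ) ^ n else 0 := by
        simp only [hterm, ← Finset.mul_sum, sum_eI_mul_conj_eI_of_bijOn hlam hν ξ ρ.2 ρ'.2,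
          Subtype.coe_inj]
    _ = diagonal (modulationVector lam (fun η => ((‖s η‖ ^ 2 : ℝ) : ℂ)) ξ) ρ ρ' := by
        rcases eq_or_ne ρ ρ' with rfl | h
        · rw [if_pos rfl, diagonal_apply_eq, modulationVector, Complex.mul_conj',
            Complex.ofReal_pow]
          field_simp
        · rw [if_neg h, mul_zero, diagonal_apply_ne _ h]

theorem sum_mul_conj_gshift_eq_gram_apply (hlam : lam ≠ 0) (f : κ → (Fin n → ℝ) → ℂ) (ξ : Fin n → ℝ)
    {ρ : Fin n → ℤ} (hρ : ρ ∈ Lambda lam n) :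
    ∑ m, f m ξ * starRingEnd ℂ (f m (gshift lam n ξ ρ)) =
      (modulationMatrix lam f ξ * (modulationMatrix lam f ξ)ᴴ)
        ⟨0, zero_mem_Lambda hlam⟩ ⟨ρ, hρ⟩ := by
  simp [modulationMatrix, mul_apply, gshift_zero]

theorem star_dotProduct_self_eq_sum_norm_sq (w : κ → ℂ) :
    star w ⬝ᵥ w = ∑ l, ((‖w l‖ ^ 2 : ℝ) : ℂ) :=
  Finset.sum_congr rfl fun l _ => by
    rw [Complex.ofReal_pow, ← Complex.conj_mul', Pi.star_apply, starRingEnd_apply]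

end Modulation

open Matrix in
theorem OEP_from_SOS_general {lam n : ℕ} (hlam : lam ≠ 0) {ι κ : Type*} [Fintype ι] [Fintype κ]
    {S τ s : (Fin n → ℝ) → ℂ} {g : ι → (Fin n → ℝ) → ℂ}
    (hS : IsTwoPiPeriodic S) (hτ : IsTwoPiPeriodic τ) (hs : IsTwoPiPeriodic s)
    (hg : ∀ l, IsTwoPiPeriodic (g l))
    {ν : κ → Fin n → ℤ} (hν : Set.BijOn ν Set.univ (Lambda lam n))
    {a : κ → (Fin n → ℝ) → ℂ}
    (ha : ∀ m ξ, a m ξ = ((Real.sqrt ((lam : ℝ) ^ n))⁻¹ : ℂ) * eI n (ν m) ξ * s ξ)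
    {q1 : ι → (Fin n → ℝ) → ℂ}
    (hq1 : ∀ l ξ, q1 l ξ = S (dil lam n ξ) * τ ξ * starRingEnd ℂ (g l (dil lam n ξ)))
    {q2 : κ → (Fin n → ℝ) → ℂ}
    (hq2 : ∀ m ξ, q2 m ξ = S ξ * a m ξ - S (dil lam n ξ) * τ ξ *
      ∑ ρ ∈ Lambda lam n, starRingEnd ℂ (τ (gshift lam n ξ ρ)) * a m (gshift lam n ξ ρ))
    {ξ : Fin n → ℝ} (hSd : (S (dil lam n ξ)).im = 0)
    (hSs : ∀ ρ ∈ Lambda lam n, ((‖s (gshift lam n ξ ρ)‖ ^ 2 : ℝ) : ℂ) * S (gshift lam n ξ ρ) = 1)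
    (hSOS : S (dil lam n ξ) ≠ 0 →
      (S (dil lam n ξ))⁻¹ - ∑ ρ ∈ Lambda lam n,
          ((‖τ (gshift lam n ξ ρ)‖ ^ 2 : ℝ) : ℂ) / S (gshift lam n ξ ρ) =
        ∑ l, ((‖g l (dil lam n ξ)‖ ^ 2 : ℝ) : ℂ))
    {ρ₀ : Fin n → ℤ} (hρ₀ : ρ₀ ∈ Lambda lam n) :
    S (dil lam n ξ) * τ ξ * starRingEnd ℂ (τ (gshift lam n ξ ρ₀))
        + (∑ l, q1 l ξ * starRingEnd ℂ (q1 l (gshift lam n ξ ρ₀)))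
        + (∑ m, q2 m ξ * starRingEnd ℂ (q2 m (gshift lam n ξ ρ₀)))
      = if ρ₀ = 0 then S ξ else 0 := by
  set D := S (dil lam n ξ)
  set t := modulationVector lam τ ξ with ht
  have hDsa : IsSelfAdjoint D := Complex.conj_eq_iff_im.mpr hSd
  have ha_per (m : κ) : IsTwoPiPeriodic (a m) := fun k η => by
    simp only [ha, isTwoPiPeriodic_eI (ν m) k η, hs k η]
  have hgram := modulationMatrix_mul_conjTranspose_eq_diagonal hlam hν ha ξ
  have hA : diagonal (modulationVector lam S ξ) *
      (modulationMatrix lam a ξ * (modulationMatrix lam a ξ)ᴴ) = 1 := by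
    rw [hgram, diagonal_mul_diagonal, ← diagonal_one]
    exact congrArg diagonal (funext fun ρ => (mul_comm _ _).trans (hSs ρ ρ.2))
  have hSOS' : D ^ 2 * (star t ⬝ᵥ (modulationMatrix lam a ξ * (modulationMatrix lam a ξ)ᴴ) *ᵥ t +
      (star fun l => g l (dil lam n ξ)) ⬝ᵥ fun l => g l (dil lam n ξ)) = D := by
    rw [hgram, ht, dotProduct_diagonal_normSq_mulVec hSs, star_dotProduct_self_eq_sum_norm_sq]
    rcases eq_or_ne D 0 with h | h
    · simp [h]
    · rw [← hSOS h, add_sub_cancel, sq, mul_assoc, mul_inv_cancel₀ h, mul_one]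
  have hmatrix := smul_rankOne_add_gram_eq hA hDsa hSOS'
  rw [add_smul, ← gram_vecMulVec_smul_star hDsa, ← modulationMatrix_eq_vecMulVec hS hg hlam hq1,
    ← modulationMatrix_eq_sub_smul_rankOne_mul hS hτ ha_per hlam hq2] at hmatrix
  have hentry := congrFun₂ hmatrix ⟨0, zero_mem_Lambda hlam⟩ ⟨ρ₀, hρ₀⟩
  simp only [Matrix.add_apply, ← sum_mul_conj_gshift_eq_gram_apply hlam] at hentry
  simpa [modulationVector, gshift_zero, diagonal_apply, mul_assoc, eq_comm, ht, vecMulVec_apply]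
    using hentry

/-- if f_{τ,S} admits the SOS representation Σ_l |g_l(λξ)|², then the
masks q_{1,l}, q_{2,m} built from the SOS generators satisfy the OEP condition:
S(λξ)τ(ξ)conj(τ(ξ+γ)) + Σ_l q_{1,l}(ξ)conj(q_{1,l}(ξ+γ)) + Σ_m q_{2,m}(ξ)conj(q_{2,m}(ξ+γ))
equals S(ξ) for γ = 0 and 0 for γ ∈ Γ∖{0}, wherever everything is defined. -/
theorem OEP_from_SOS (lam n L : ℕ) (hlam : 2 ≤ lam) (hn : 1 ≤ n)
    (S : RatTrigPoly n)
    (hSreal : ∀ ξ, S.DefinedAt ξ → (S ξ).im = 0 ∧ 0 ≤ (S ξ).re)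
    (hSne : ∃ ξ, S.DefinedAt ξ ∧ S ξ ≠ 0)
    (τ : RatTrigPoly n) (hτdef : τ.DefinedAt 0) (hτ0 : τ 0 = 1)
    (s : RatTrigPoly n)
    (hs : ∀ ξ, s.DefinedAt ξ → S.DefinedAt ξ → S ξ ≠ 0 →
      ((‖s ξ‖ ^ 2 : ℝ) : ℂ) = (S ξ)⁻¹)
    (g : Fin L → RatTrigPoly n)
    (hSOS : ∀ ξ : Fin n → ℝ,
      (S.DefinedAt (dil lam n ξ) ∧ S (dil lam n ξ) ≠ 0) →
      (∀ ρ ∈ Lambda lam n, τ.DefinedAt (gshift lam n ξ ρ) ∧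
        S.DefinedAt (gshift lam n ξ ρ) ∧ S (gshift lam n ξ ρ) ≠ 0) →
      (∀ l, (g l).DefinedAt (dil lam n ξ)) →
      (S (dil lam n ξ))⁻¹
          - ∑ ρ ∈ Lambda lam n,
              ((‖τ (gshift lam n ξ ρ)‖ ^ 2 : ℝ) : ℂ) / S (gshift lam n ξ ρ)
        = ∑ l, ((‖g l (dil lam n ξ)‖ ^ 2 : ℝ) : ℂ))
    (ν : Fin (lam ^ n) → Fin n → ℤ)
    (hν_inj : Function.Injective ν) (hν_mem : ∀ m, ν m ∈ Lambda lam n)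
    (hν_surj : ∀ ρ ∈ Lambda lam n, ∃ m, ν m = ρ)
    (a : Fin (lam ^ n) → (Fin n → ℝ) → ℂ)
    (ha : ∀ m ξ, a m ξ = ((Real.sqrt ((lam : ℝ) ^ n))⁻¹ : ℂ) * eI n (ν m) ξ * s ξ)
    (q1 : Fin L → (Fin n → ℝ) → ℂ)
    (hq1 : ∀ l ξ, q1 l ξ = S (dil lam n ξ) * τ ξ * (starRingEnd ℂ) (g l (dil lam n ξ)))
    (q2 : Fin (lam ^ n) → (Fin n → ℝ) → ℂ)
    (hq2 : ∀ m ξ, q2 m ξ = S ξ * a m ξ -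
      S (dil lam n ξ) * τ ξ *
        ∑ ρ ∈ Lambda lam n,
          (starRingEnd ℂ) (τ (gshift lam n ξ ρ)) * a m (gshift lam n ξ ρ)) :
    ∀ ρ₀ ∈ Lambda lam n, ∀ ξ : Fin n → ℝ,
      (∀ ρ ∈ Lambda lam n, ∀ ρ' ∈ Lambda lam n,
        τ.DefinedAt (gshift lam n (gshift lam n ξ ρ) ρ') ∧
        S.DefinedAt (gshift lam n (gshift lam n ξ ρ) ρ') ∧
        s.DefinedAt (gshift lam n (gshift lam n ξ ρ) ρ')) →
      (τ.DefinedAt ξ ∧ S.DefinedAt ξ ∧ s.DefinedAt ξ ∧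
        S.DefinedAt (dil lam n ξ) ∧ S.DefinedAt (dil lam n (gshift lam n ξ ρ₀))) →
      (∀ l, (g l).DefinedAt (dil lam n ξ) ∧
        (g l).DefinedAt (dil lam n (gshift lam n ξ ρ₀))) →
      S (dil lam n ξ) * τ ξ * (starRingEnd ℂ) (τ (gshift lam n ξ ρ₀))
        + (∑ l, q1 l ξ * (starRingEnd ℂ) (q1 l (gshift lam n ξ ρ₀)))
        + (∑ m, q2 m ξ * (starRingEnd ℂ) (q2 m (gshift lam n ξ ρ₀)))
      = if ρ₀ = 0 then S ξ else 0 := by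
  intro ρ₀ hρ₀ ξ hdef ⟨_, _, _, hSd, _⟩ hg
  have hlam₀ : lam ≠ 0 := by omega
  have hdef₀ (ρ) (hρ : ρ ∈ Lambda lam n) : τ.DefinedAt (gshift lam n ξ ρ) ∧
      S.DefinedAt (gshift lam n ξ ρ) ∧ s.DefinedAt (gshift lam n ξ ρ) := by
    simpa only [gshift_zero] using hdef ρ hρ 0 (zero_mem_Lambda hlam₀)
  have hSs (ρ) (hρ : ρ ∈ Lambda lam n) :
      ((‖s (gshift lam n ξ ρ)‖ ^ 2 : ℝ) : ℂ) * S (gshift lam n ξ ρ) = 1 :=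
    RatTrigPoly.normSq_mul_eq_one (hSne.imp fun _ => And.right) hs (hdef₀ ρ hρ).2.2
      (hdef₀ ρ hρ).2.1
  exact OEP_from_SOS_general hlam₀ S.isTwoPiPeriodic τ.isTwoPiPeriodic s.isTwoPiPeriodic
    (fun l => (g l).isTwoPiPeriodic)
    ⟨fun m _ => hν_mem m, hν_inj.injOn, fun ρ hρ => by simpa using hν_surj ρ hρ⟩
    ha hq1 hq2 (hSreal _ hSd).1 hSs
    (fun hS₀ => hSOS ξ ⟨hSd, hS₀⟩ (fun ρ hρ => ⟨(hdef₀ ρ hρ).1, (hdef₀ ρ hρ).2.1,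
      right_ne_zero_of_mul_eq_one (hSs ρ hρ)⟩) fun l => (hg l).1) hρ₀
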